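/- Let n ≥ 1 be an integer, let d be a real number with 1 ≤ d ≤ n, and let X be a binomial random variable with n trials and success probability d/n. Then for every real x ≥ 0, P[X ≥ x] ≤ e^{-(x/(3d) - 1) d} = e^{d - x/3}. -/

import Mathlib

/-!
The proof is the exponential-moment (Chernoff) method at the fixed parameter `1 / 3`. With
`p = d / n`, independence gives `E[exp (X / 3)] = (1 + p * (exp (1 / 3) - 1)) ^ n`. Since
`exp (1 / 3) ≤ 2`, this is at most `(1 + p) ^ n ≤ exp (n * p) = exp d`, and Markov's inequality
for `exp (X / 3)` gives `P[X ≥ x] ≤ exp (-x / 3) * exp d`.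
-/

open MeasureTheory
open scoped NNReal ENNReal

/-- The Bernoulli measure on `Bool` with success probability `p`. -/
noncomputable def bernoulliMeasure (p : ℝ≥0) : Measure Bool :=
  p • Measure.dirac true + (1 - p) • Measure.dirac false

/-- The law of `N` independent Bernoulli(`p`) trials. -/
noncomputable def bernoulliTrials (N : ℕ) (p : ℝ≥0) : Measure (Fin N → Bool) :=
  Measure.pi fun _ => bernoulliMeasure p

/-- The number of successes among the trials (a binomial random variable). -/
def numSuccesses {N : ℕ} (ω : Fin N → Bool) : ℕ :=
  (Finset.univ.filter fun i => ω i = true).card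

lemma isProbabilityMeasure_bernoulliMeasure {p : ℝ≥0} (hp : p ≤ 1) :
    IsProbabilityMeasure (bernoulliMeasure p) := by
  refine ⟨?_⟩
  have h : ((p + (1 - p) : ℝ≥0) : ℝ≥0∞) = 1 := by rw [add_tsub_cancel_of_le hp]; simp
  rw [ENNReal.coe_add] at h
  rw [bernoulliMeasure, Measure.add_apply, Measure.smul_apply, Measure.smul_apply, measure_univ,
    measure_univ, ENNReal.smul_def, ENNReal.smul_def, smul_eq_mul, smul_eq_mul, mul_one, mul_one, h]

lemma integral_bernoulliMeasure {p : ℝ≥0} (hp : p ≤ 1) (f : Bool → ℝ) :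
    ∫ b, f b ∂(bernoulliMeasure p) = p * f true + (1 - p) * f false := by
  rw [bernoulliMeasure, integral_add_measure .of_finite .of_finite,
    integral_smul_nnreal_measure, integral_smul_nnreal_measure]
  simp [NNReal.smul_def, NNReal.coe_sub hp]

lemma exp_mul_numSuccesses {N : ℕ} (t : ℝ) (ω : Fin N → Bool) :
    Real.exp (t * (numSuccesses ω : ℝ)) = ∏ i, (if ω i = true then Real.exp t else 1) := by
  rw [numSuccesses, Finset.prod_ite, Finset.prod_const, Finset.prod_const_one, mul_one,
    mul_comm, Real.exp_nat_mul]

/-- The moment generating function of the binomial distribution. -/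
lemma mgf_numSuccesses {N : ℕ} {p : ℝ≥0} (hp : p ≤ 1) (t : ℝ) :
    ProbabilityTheory.mgf (fun ω => (numSuccesses ω : ℝ)) (bernoulliTrials N p) t
      = (1 + p * (Real.exp t - 1)) ^ N := by
  have := isProbabilityMeasure_bernoulliMeasure hp
  simp only [ProbabilityTheory.mgf, exp_mul_numSuccesses, bernoulliTrials]
  rw [integral_fintype_prod_eq_pow (fun b : Bool => if b = true then Real.exp t else 1),
    integral_bernoulliMeasure hp, Fintype.card_fin]
  simp only [if_true, Bool.false_eq_true, if_false]
  ring

lemma exp_one_third_le_two : Real.exp (1 / 3) ≤ 2 := by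
  have h : Real.exp (1 / 3) ^ 3 = Real.exp 1 := by rw [← Real.exp_nat_mul]; norm_num
  refine le_of_pow_le_pow_left₀ (n := 3) (by norm_num) (by norm_num) ?_
  rw [h]
  linarith [Real.exp_one_lt_d9]

/-- Chernoff bound: if `X` is binomial with `n` trials and success probability
`d/n`, where `1 ≤ d ≤ n`, then for every `x ≥ 0`,
`P[X ≥ x] ≤ e^(-(x/(3d) - 1) d) = e^(d - x/3)`. -/
theorem binomial_tail_exp_bound
    (n : ℕ) (hn : 1 ≤ n) (d : ℝ) (hd1 : 1 ≤ d) (hdn : d ≤ n)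
    (x : ℝ) (hx : 0 ≤ x) :
    bernoulliTrials n (Real.toNNReal (d / n))
      {ω | x ≤ (numSuccesses ω : ℝ)}
      ≤ ENNReal.ofReal (Real.exp (-(x / (3 * d) - 1) * d)) := by
  have hn0 : (0 : ℝ) < n := by exact_mod_cast hn
  have hp0 : 0 ≤ d / n := by positivity
  set p := Real.toNNReal (d / n) with hpdef
  have hpc : (p : ℝ) = d / n := Real.coe_toNNReal _ hp0
  have hp : p ≤ 1 := by
    rw [← NNReal.coe_le_coe, hpc, NNReal.coe_one]
    exact (div_le_one hn0).2 hdn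
  have := isProbabilityMeasure_bernoulliMeasure hp
  have : IsProbabilityMeasure (bernoulliTrials n p) := by
    unfold bernoulliTrials; infer_instance
  have hmgf : ProbabilityTheory.mgf (fun ω => (numSuccesses ω : ℝ)) (bernoulliTrials n p) (1 / 3)
      ≤ Real.exp d := by
    rw [mgf_numSuccesses hp, hpc]
    have h1 : 1 + d / n * (Real.exp (1 / 3) - 1) ≤ Real.exp (d / n) := by
      nlinarith [exp_one_third_le_two, Real.add_one_le_exp (d / n)]
    have h0 : 0 ≤ 1 + d / n * (Real.exp (1 / 3) - 1) := by
      have : 1 ≤ Real.exp (1 / 3) := Real.one_le_exp (by norm_num)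
      have := mul_nonneg hp0 (sub_nonneg.2 this)
      linarith
    calc _ ≤ Real.exp (d / n) ^ n := pow_le_pow_left₀ h0 h1 n
      _ = Real.exp d := by rw [← Real.exp_nat_mul, mul_div_cancel₀ d hn0.ne']
  have hmarkov := ProbabilityTheory.measure_ge_le_exp_mul_mgf (μ := bernoulliTrials n p)
    (X := fun ω => (numSuccesses ω : ℝ)) (t := 1 / 3) x (by norm_num) .of_finite
  rw [← ofReal_measureReal]
  refine ENNReal.ofReal_le_ofReal (hmarkov.trans ?_)
  calc _ ≤ Real.exp (-(1 / 3) * x) * Real.exp d := by gcongr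
    _ = Real.exp (-(x / (3 * d) - 1) * d) := by
      rw [← Real.exp_add]
      congr 1
      field_simp
      ring
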